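/- Let H be a torsion-free Hopf algebra over C[q,q⁻¹], C_q a unital subalgebra and left coideal of H, C_q^▽ the subalgebra of H^∨ generated by (q−1)⁻¹(C_q∩J), and C_q^Lsh-construction applied to C_q^▽ inside H^∨, i.e. (C_q^▽)^Lsh := { x ∈ C_q^▽ | δ_n(x) ∈ (q−1)ⁿ (H^∨)^{⊗(n−1)} ⊗ C_q^▽ ∀n ≥ 1 }. Then C_q ⊆ (C_q^▽)^Lsh, and consequently C_q^▽ = ((C_q^▽)^Lsh)^▽. -/

import Mathlib

set_option synthInstance.maxHeartbeats 1000000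
set_option maxHeartbeats 1000000

/- STATEMENT 17: reciprocity for left coideal subalgebras. For a unital subalgebra and
   left coideal C_q of a torsion-free Hopf algebra H over ℂ[q,q⁻¹] (an integral form of a
   ℂ(q)-Hopf algebra A), with C_q^▽ the subalgebra of H^∨ generated by (q−1)⁻¹(C_q ∩ J) and
   (C_q^▽)^Lsh := { x ∈ C_q^▽ | δ_n(x) ∈ (q−1)ⁿ(H^∨)^{⊗(n−1)}⊗C_q^▽ ∀n≥1 }, one has
   C_q ⊆ (C_q^▽)^Lsh and consequently C_q^▽ = ((C_q^▽)^Lsh)^▽. -/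

open scoped TensorProduct
open PiTensorProduct

namespace GQDP

/-- The ground ring `ℂ[q,q⁻¹]` of complex Laurent polynomials. -/
abbrev R : Type := LaurentPolynomial ℂ

/-- The field `ℂ(q)` of rational functions, realized as the fraction field of `ℂ[q,q⁻¹]`. -/
abbrev K : Type := FractionRing R

/-- The indeterminate `q`, as an element of `ℂ[q,q⁻¹]`. -/
noncomputable def q : R := LaurentPolynomial.T 1

/-- The indeterminate `q`, as an element of `ℂ(q)`. -/
noncomputable def qK : K := algebraMap R K q

/- `A` is a Hopf algebra over `ℂ(q)` (playing the role of `H ⊗_{ℂ[q,q⁻¹]} ℂ(q)`), in which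
   all the `ℂ[q,q⁻¹]`-integral forms below live as `R`-submodules. -/
variable (A : Type*) [Ring A] [HopfAlgebra K A] [Algebra R A] [IsScalarTower R K A]

/-- Scaling of an `R`-submodule of `A` by a scalar `c ∈ ℂ(q)`. -/
noncomputable def ksmul (c : K) (p : Submodule R A) : Submodule R A :=
  Submodule.span R ((fun a => c • a) '' (p : Set A))

/-- The "tensor product" of two `R`-submodules of `A` inside `A ⊗[ℂ(q)] A`: the additive
    subgroup generated by the corresponding pure tensors (this is also their `R`-span). -/
noncomputable def tsubK (P Q : Submodule R A) : AddSubgroup (A ⊗[K] A) :=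
  AddSubgroup.closure {z | ∃ p ∈ P, ∃ r ∈ Q, z = p ⊗ₜ[K] r}

/-- The augmentation ideal `J := H ∩ ker ε` of an integral form `H ⊆ A`. -/
noncomputable def Jform (H : Submodule R A) : Submodule R A :=
  H ⊓ (LinearMap.ker (Coalgebra.counit : A →ₗ[K] K)).restrictScalars R

/-- Drinfeld's algebra `H^∨ := Σ_{n≥0} (q−1)^{−n} Jⁿ`. -/
noncomputable def Hvee (H : Submodule R A) : Submodule R A :=
  ⨆ n : ℕ, ksmul A (((qK - 1)⁻¹) ^ n) ((Jform A H) ^ n)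

/-- `H` is a Hopf-algebra integral form of `A` over `ℂ[q,q⁻¹]`: a unital `R`-subalgebra,
    with `Δ(H) ⊆ H ⊗ H`, `ε(H) ⊆ ℂ[q,q⁻¹]` and `S(H) ⊆ H`. -/
structure IsHopfForm (H : Submodule R A) : Prop where
  one_mem : (1 : A) ∈ H
  mul_mem : ∀ x ∈ H, ∀ y ∈ H, x * y ∈ H
  comul_mem : ∀ x ∈ H, Coalgebra.comul (R := K) x ∈ tsubK A H H
  counit_mem : ∀ x ∈ H, ∃ r : R, Coalgebra.counit (R := K) x = algebraMap R K r
  antipode_mem : ∀ x ∈ H, HopfAlgebra.antipode (R := K) x ∈ H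

/-- The `n`-fold tensor power `A^{⊗n}` over `ℂ(q)`. -/
abbrev TPK (n : ℕ) := ⨂[K] (_ : Fin n), A

/-- The "tensor product" of a family of `R`-submodules `p i ⊆ A` inside `A^{⊗n}`: the
    additive subgroup generated by the pure tensors with `i`-th entry in `p i`. -/
noncomputable def tgrpK {n : ℕ} (p : Fin n → Submodule R A) : AddSubgroup (TPK A n) :=
  AddSubgroup.closure {z | ∃ f : Fin n → A, (∀ i, f i ∈ p i) ∧ z = PiTensorProduct.tprod K f}

/-- The canonical map `A ⊗ A^{⊗n} → A^{⊗(n+1)}`. -/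
noncomputable def stepK (n : ℕ) : (A ⊗[K] TPK A n) →ₗ[K] TPK A (n + 1) :=
  ((PiTensorProduct.reindex K (fun _ : Fin 1 ⊕ Fin n => A)
      (finSumFinEquiv.trans (finCongr (Nat.add_comm 1 n)))).toLinearMap
    ∘ₗ (PiTensorProduct.tmulEquiv (ι := Fin 1) (ι₂ := Fin n) K A).toLinearMap)
    ∘ₗ (LinearMap.rTensor (TPK A n)
      (PiTensorProduct.subsingletonEquiv (0 : Fin 1) : (⨂[K] (_ : Fin 1), A) ≃ₗ[K] A).symm.toLinearMap)

/-- The iterated coproduct `Δⁿ : A → A^{⊗n}`, with `Δ⁰ := ε` and `Δ^{n+1} := (id ⊗ Δⁿ) ∘ Δ`. -/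
noncomputable def DeltaIterK : (n : ℕ) → A →ₗ[K] TPK A n
  | 0 => (PiTensorProduct.isEmptyEquiv (ι := Fin 0)).symm.toLinearMap
          ∘ₗ (Coalgebra.counit : A →ₗ[K] K)
  | n + 1 => stepK A n ∘ₗ LinearMap.lTensor A (DeltaIterK n)
              ∘ₗ (Coalgebra.comul : A →ₗ[K] A ⊗[K] A)

/-- `δ_n := (id − η∘ε)^{⊗n} ∘ Δⁿ : A → A^{⊗n}`. -/
noncomputable def deltaNK (n : ℕ) : A →ₗ[K] TPK A n :=
  (PiTensorProduct.map fun _ =>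
      (LinearMap.id : A →ₗ[K] A) - Algebra.linearMap K A ∘ₗ (Coalgebra.counit : A →ₗ[K] K))
    ∘ₗ DeltaIterK A n

/-- `C^▽`: the unital `R`-subalgebra of `A` generated by `(q−1)⁻¹·(C ∩ ker ε)`. -/
noncomputable def Cvee (C : Submodule R A) : Subalgebra R A :=
  Algebra.adjoin R
    ((ksmul A ((qK - 1)⁻¹)
      (C ⊓ (LinearMap.ker (Coalgebra.counit : A →ₗ[K] K)).restrictScalars R) : Submodule R A) : Set A)

/-- The Drinfeld-type transform `(C^▽)^Lsh` relative to `H^∨`. -/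
noncomputable def CveeLsh (H C : Submodule R A) : Set A :=
  {x | x ∈ Cvee A C ∧ ∀ n : ℕ,
    ∃ y ∈ tgrpK A (fun i : Fin (n + 1) =>
        if i = Fin.last n then Subalgebra.toSubmodule (Cvee A C) else Hvee A H),
      deltaNK A (n + 1) x = ((qK - 1) ^ (n + 1)) • y}

set_option linter.unusedSectionVars false

theorem qK_sub_one_ne : (qK - 1 : K) ≠ 0 := by
  intro h
  have h1 : algebraMap R K q = algebraMap R K 1 := by
    rw [map_one]; exact sub_eq_zero.mp h
  have h2 : q = 1 := IsFractionRing.injective R K h1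
  have h3 : (LaurentPolynomial.T 1 : R) = LaurentPolynomial.T 0 := by
    rw [LaurentPolynomial.T_zero]; exact h2
  have h4 : (Finsupp.single (1 : ℤ) (1 : ℂ)) = Finsupp.single 0 1 :=
    congrArg AddMonoidAlgebra.coeff h3
  have h5 := DFunLike.congr_fun h4 (1 : ℤ)
  simp at h5

theorem qK_sub_one_smul (a : A) : (qK - 1 : K) • a = (q - 1 : R) • a := by
  rw [← algebraMap_smul K (q - 1 : R) a, map_sub, map_one]; rfl

theorem mem_ksmul {c : K} {p : Submodule R A} {a : A} (h : a ∈ p) : c • a ∈ ksmul A c p :=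
  Submodule.subset_span ⟨a, h, rfl⟩

/-- The projection `id − η∘ε`. -/
noncomputable def projK : A →ₗ[K] A :=
  (LinearMap.id : A →ₗ[K] A) - Algebra.linearMap K A ∘ₗ (Coalgebra.counit : A →ₗ[K] K)

theorem projK_apply (a : A) :
    projK A a = a - algebraMap K A (Coalgebra.counit (R := K) a) := rfl

theorem projK_mem {H C : Submodule R A} (hH : IsHopfForm A H) (hCH : C ≤ H) (hC1 : (1 : A) ∈ C)
    {a : A} (ha : a ∈ C) :
    projK A a ∈ C ⊓ (LinearMap.ker (Coalgebra.counit : A →ₗ[K] K)).restrictScalars R := by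
  obtain ⟨r, hr⟩ := hH.counit_mem a (hCH ha)
  refine ⟨?_, ?_⟩
  · rw [projK_apply, hr, Algebra.algebraMap_eq_smul_one, algebraMap_smul]
    exact C.sub_mem ha (C.smul_mem r hC1)
  · simp [projK_apply]

theorem stepK_tprod (n : ℕ) (a : A) (f : Fin n → A) :
    stepK A n (a ⊗ₜ[K] PiTensorProduct.tprod K f) =
      PiTensorProduct.tprod K (Fin.cons a f : Fin (n + 1) → A) := by
  have h : (PiTensorProduct.subsingletonEquiv (0 : Fin 1) : (⨂[K] (_ : Fin 1), A) ≃ₗ[K] A).symm a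
      = PiTensorProduct.tprod K (fun _ => a) := by
    rw [LinearEquiv.symm_apply_eq]; simp
  simp only [stepK, LinearMap.comp_apply, LinearMap.rTensor_tmul, LinearEquiv.coe_coe, h]
  erw [PiTensorProduct.tmulEquiv_apply]
  rw [PiTensorProduct.reindex_tprod]
  congr 1
  funext i
  refine Fin.cases ?_ (fun j => ?_) i
  · have : (finSumFinEquiv.trans (finCongr (Nat.add_comm 1 n))).symm 0 = Sum.inl 0 := by
      rw [Equiv.symm_apply_eq]; ext; simp
    rw [this]; simp
  · have : (finSumFinEquiv.trans (finCongr (Nat.add_comm 1 n))).symm j.succ = Sum.inr j := by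
      rw [Equiv.symm_apply_eq]; ext; simp
    rw [this]; simp

theorem DeltaIterK_one (a : A) :
    DeltaIterK A 1 a = PiTensorProduct.tprod K (fun _ : Fin 1 => a) := by
  have h := Coalgebra.lTensor_counit_comul (R := K) a
  have h0 : (PiTensorProduct.isEmptyEquiv (R := K) (s := fun _ : Fin 0 => A)
      (ι := Fin 0)).symm 1 = PiTensorProduct.tprod K (Fin.elim0) := by
    rw [LinearEquiv.symm_apply_eq]; simp
  simp only [DeltaIterK, LinearMap.comp_apply, LinearMap.lTensor_comp, h, LinearMap.lTensor_tmul,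
    LinearEquiv.coe_coe, h0]
  rw [stepK_tprod]
  congr 1
  funext i
  refine Fin.cases rfl (fun j => j.elim0) i

theorem deltaNK_one (a : A) :
    deltaNK A 1 a = PiTensorProduct.tprod K (fun _ : Fin 1 => projK A a) := by
  rw [deltaNK, LinearMap.comp_apply, DeltaIterK_one, PiTensorProduct.map_tprod]; rfl

theorem DeltaIterK_mem {H C : Submodule R A}
    (hco : ∀ c ∈ C, Coalgebra.comul (R := K) c ∈ tsubK A H C) (n : ℕ) :
    ∀ c ∈ C, DeltaIterK A (n + 1) c ∈
      tgrpK A (fun i : Fin (n + 1) => if i = Fin.last n then C else H) := by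
  induction n with
  | zero =>
    intro c hc
    rw [DeltaIterK_one]
    refine AddSubgroup.subset_closure ⟨_, fun i => ?_, rfl⟩
    have hi : i = Fin.last 0 := Fin.ext (by simp)
    simpa [hi] using hc
  | succ n ih =>
    intro c hc
    rw [DeltaIterK, LinearMap.comp_apply, LinearMap.comp_apply]
    refine AddSubgroup.closure_induction (p := fun z _ =>
      stepK A (n + 1) (LinearMap.lTensor A (DeltaIterK A (n + 1)) z) ∈
        tgrpK A (fun i : Fin (n + 1 + 1) => if i = Fin.last (n + 1) then C else H))
      ?_ ?_ ?_ ?_ (hco c hc)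
    · rintro _ ⟨p, hp, r, hr, rfl⟩
      rw [LinearMap.lTensor_tmul]
      refine AddSubgroup.closure_induction (p := fun z _ =>
        stepK A (n + 1) (p ⊗ₜ[K] z) ∈
          tgrpK A (fun i : Fin (n + 1 + 1) => if i = Fin.last (n + 1) then C else H))
        ?_ ?_ ?_ ?_ (ih r hr)
      · rintro _ ⟨f, hf, rfl⟩
        rw [stepK_tprod]
        refine AddSubgroup.subset_closure ⟨_, fun i => ?_, rfl⟩
        refine Fin.cases ?_ (fun j => ?_) i
        · have h0 : (0 : Fin (n + 1 + 1)) ≠ Fin.last (n + 1) := by simp [Fin.ext_iff]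
          simp only [if_neg h0]; simpa using hp
        · have := hf j
          simpa [← Fin.succ_last] using this
      · rw [TensorProduct.tmul_zero, map_zero]; exact zero_mem _
      · intro x y _ _ hx hy
        rw [TensorProduct.tmul_add, map_add]; exact add_mem hx hy
      · intro x _ hx
        rw [TensorProduct.tmul_neg, map_neg]; exact neg_mem hx
    · rw [map_zero, map_zero]; exact zero_mem _
    · intro x y _ _ hx hy
      rw [map_add, map_add]; exact add_mem hx hy
    · intro x _ hx
      rw [map_neg, map_neg]; exact neg_mem hx

theorem inv_smul_mem_Cvee {C : Submodule R A} {a : A}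
    (h : a ∈ C ⊓ (LinearMap.ker (Coalgebra.counit : A →ₗ[K] K)).restrictScalars R) :
    (qK - 1 : K)⁻¹ • a ∈ Cvee A C :=
  Algebra.subset_adjoin (mem_ksmul A h)

theorem inv_smul_mem_Hvee {H : Submodule R A} {a : A} (h : a ∈ Jform A H) :
    (qK - 1 : K)⁻¹ • a ∈ Hvee A H := by
  refine Submodule.mem_iSup_of_mem 1 ?_
  rw [pow_one, pow_one]
  exact mem_ksmul A h

theorem C_subset {H C : Submodule R A} (hH : IsHopfForm A H) (hCH : C ≤ H) (hC1 : (1 : A) ∈ C)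
    (hco : ∀ c ∈ C, Coalgebra.comul (R := K) c ∈ tsubK A H C) :
    (C : Set A) ⊆ CveeLsh A H C := by
  intro c hc
  refine ⟨?_, fun n => ?_⟩
  · have h1 := inv_smul_mem_Cvee A (projK_mem A hH hCH hC1 hc)
    have h2 := (Cvee A C).smul_mem h1 (q - 1)
    rw [← qK_sub_one_smul, smul_inv_smul₀ qK_sub_one_ne, projK_apply] at h2
    obtain ⟨r, hr⟩ := hH.counit_mem c (hCH hc)
    rw [hr, ← IsScalarTower.algebraMap_apply] at h2
    simpa using (Cvee A C).add_mem h2 ((Cvee A C).algebraMap_mem r)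
  · rw [deltaNK, LinearMap.comp_apply]
    refine AddSubgroup.closure_induction (p := fun z _ =>
      ∃ y ∈ tgrpK A (fun i : Fin (n + 1) =>
        if i = Fin.last n then Subalgebra.toSubmodule (Cvee A C) else Hvee A H),
      PiTensorProduct.map (fun _ => projK A) z = ((qK - 1) ^ (n + 1)) • y)
      ?_ ?_ ?_ ?_ (DeltaIterK_mem A hco n c hc)
    · rintro _ ⟨f, hf, rfl⟩
      refine ⟨PiTensorProduct.tprod K (fun i => (qK - 1 : K)⁻¹ • projK A (f i)),
        AddSubgroup.subset_closure ⟨_, fun i => ?_, rfl⟩, ?_⟩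
      · have := hf i
        by_cases hi : i = Fin.last n
        · simp only [if_pos hi] at this ⊢
          exact inv_smul_mem_Cvee A (projK_mem A hH hCH hC1 this)
        · simp only [if_neg hi] at this ⊢
          exact inv_smul_mem_Hvee A (projK_mem A hH le_rfl hH.one_mem this)
      · rw [PiTensorProduct.map_tprod,
          MultilinearMap.map_smul_univ (PiTensorProduct.tprod K) (fun _ => (qK - 1 : K)⁻¹)]
        rw [Finset.prod_const, Finset.card_univ, Fintype.card_fin, inv_pow,
          smul_inv_smul₀ (pow_ne_zero _ qK_sub_one_ne)]
    · exact ⟨0, zero_mem _, by rw [map_zero, smul_zero]⟩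
    · rintro x y _ _ ⟨u, hu, hx⟩ ⟨v, hv, hy⟩
      exact ⟨u + v, add_mem hu hv, by rw [map_add, hx, hy, smul_add]⟩
    · rintro x _ ⟨u, hu, hx⟩
      exact ⟨-u, neg_mem hu, by rw [map_neg, hx, smul_neg]⟩

/-- `C_q ⊆ (C_q^▽)^Lsh`, and consequently `C_q^▽ = ((C_q^▽)^Lsh)^▽`,
    where the second `▽` is the subalgebra generated by
    `(q−1)⁻¹((C_q^▽)^Lsh ∩ ker ε)`. -/
theorem C_subset_CveeLsh_and_idem (H C : Submodule R A) (hH : IsHopfForm A H)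
    (hCH : C ≤ H)
    (hC1 : (1 : A) ∈ C) (hCmul : ∀ x ∈ C, ∀ y ∈ C, x * y ∈ C)
    (hCcoideal : ∀ c ∈ C, Coalgebra.comul (R := K) c ∈ tsubK A H C) :
    ((C : Set A) ⊆ CveeLsh A H C) ∧
    Cvee A C =
      Algebra.adjoin R
        ((fun a => (qK - 1)⁻¹ • a) ''
          (CveeLsh A H C ∩ {x : A | Coalgebra.counit (R := K) x = 0})) := by
  have hsub := C_subset A hH hCH hC1 hCcoideal
  refine ⟨hsub, le_antisymm ?_ ?_⟩
  · refine Algebra.adjoin_le ?_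
    have : ksmul A ((qK - 1)⁻¹)
      (C ⊓ (LinearMap.ker (Coalgebra.counit : A →ₗ[K] K)).restrictScalars R) ≤
      Subalgebra.toSubmodule (Algebra.adjoin R
        ((fun a => (qK - 1 : K)⁻¹ • a) ''
          (CveeLsh A H C ∩ {x : A | Coalgebra.counit (R := K) x = 0}))) := by
      refine Submodule.span_le.mpr ?_
      rintro _ ⟨a, ⟨ha, hk⟩, rfl⟩
      exact Algebra.subset_adjoin ⟨a, ⟨hsub ha, hk⟩, rfl⟩
    exact this
  · refine Algebra.adjoin_le ?_
    rintro _ ⟨x, ⟨⟨_, hx⟩, hk⟩, rfl⟩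
    obtain ⟨y, hy, hxy⟩ := hx 0
    have hk' : Coalgebra.counit (R := K) x = 0 := hk
    have hp : projK A x = x := by rw [projK_apply, hk', map_zero, sub_zero]
    have hy' : (PiTensorProduct.subsingletonEquiv (0 : Fin 1) : (⨂[K] (_ : Fin 1), A) ≃ₗ[K] A) y
        ∈ Cvee A C := by
      refine AddSubgroup.closure_induction (p := fun z _ =>
        (PiTensorProduct.subsingletonEquiv (0 : Fin 1) : (⨂[K] (_ : Fin 1), A) ≃ₗ[K] A) z
          ∈ Cvee A C) ?_ ?_ ?_ ?_ hy
      · rintro _ ⟨f, hf, rfl⟩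
        have := hf 0
        rw [PiTensorProduct.subsingletonEquiv_apply_tprod]
        simpa using this
      · rw [map_zero]; exact zero_mem _
      · intro a b _ _ ha hb
        rw [map_add]; exact add_mem ha hb
      · intro a _ ha
        rw [map_neg]; exact neg_mem ha
    have hxy' : deltaNK A 1 x = (qK - 1 : K) • y := by
      have h1 := hxy
      rw [show (qK - 1 : K) ^ (0 + 1) = qK - 1 from pow_one _] at h1
      exact h1
    have h := congrArg
      (PiTensorProduct.subsingletonEquiv (0 : Fin 1) : (⨂[K] (_ : Fin 1), A) ≃ₗ[K] A) hxy'
    rw [map_smul, deltaNK_one,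
      PiTensorProduct.subsingletonEquiv_apply_tprod, hp] at h
    change (qK - 1 : K)⁻¹ • x ∈ Cvee A C
    rw [h, inv_smul_smul₀ qK_sub_one_ne]
    exact hy'

end GQDP
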